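/- Stabilizer of a canonical basis vector with nonzero index: for every ℓ with 2ℓ ∈ ℕ and every admissible s ∈ {−ℓ,…,ℓ} with s ≠ 0, the isotropy subgroup {g ∈ SU(2) : D^ℓ(g) e_s = e_s} equals the set of diagonal matrices {h(α, 0) : α ∈ ℂ, α^{2|s|} = 1}; in particular it is a cyclic group of order 2|s|. -/

import Mathlib

open scoped ComplexConjugate Matrix
open MeasureTheory Complex

noncomputable section

/-- `SU(2)` realized as the subgroup of the `2 × 2` complex unitary group consisting of the
matrices of determinant one; its elements are exactly the matrices
`h(α,β) = !![α, -conj β; β, conj α]` with `|α|² + |β|² = 1`. -/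
def SU2 : Subgroup (Matrix.unitaryGroup (Fin 2) ℂ) where
  carrier := {A | (A : Matrix (Fin 2) (Fin 2) ℂ).det = 1}
  mul_mem' := by
    intro A B hA hB
    simp only [Set.mem_setOf_eq] at *
    simp [Matrix.UnitaryGroup.mul_val, Matrix.det_mul, hA, hB]
  one_mem' := by simp [Set.mem_setOf_eq]
  inv_mem' := by
    intro A hA
    simp only [Set.mem_setOf_eq] at *
    simp [Matrix.UnitaryGroup.inv_val, Matrix.star_eq_conjTranspose, Matrix.det_conjTranspose, hA]

instance : MeasurableSpace SU2 := borel SU2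
instance : BorelSpace SU2 := ⟨rfl⟩

/-- The matrix `h(α,β)`. -/
def h (a b : ℂ) : Matrix (Fin 2) (Fin 2) ℂ := !![a, -conj b; b, conj a]

/-- The entry `α` of an element `g = h(α,β)` of `SU(2)`. -/
def ga (g : SU2) : ℂ := g.1.1 0 0

/-- The entry `β` of an element `g = h(α,β)` of `SU(2)`. -/
def gb (g : SU2) : ℂ := g.1.1 1 0

/-- `IsWigner n D` states that `D` is the family of Wigner functions `D^ℓ_{m,s}` for `ℓ = n/2`,
where the row index `j` corresponds to `m = j - ℓ` and the column index `k` to `s = k - ℓ`: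
for every `g = h(α,β) ∈ SU(2)` and all `z₀ z₁ : ℂ`,
`∑ⱼ √(binom n j) z₀^j z₁^(n-j) D j k g = √(binom n k) (conj α z₀ + conj β z₁)^k (-β z₀ + α z₁)^(n-k)`. -/
def IsWigner (n : ℕ) (D : Fin (n + 1) → Fin (n + 1) → SU2 → ℂ) : Prop :=
  ∀ (g : SU2) (k : Fin (n + 1)) (z₀ z₁ : ℂ),
    ∑ j : Fin (n + 1),
        (Real.sqrt (n.choose (j : ℕ)) : ℂ) * z₀ ^ (j : ℕ) * z₁ ^ (n - (j : ℕ)) * D j k g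
      = (Real.sqrt (n.choose (k : ℕ)) : ℂ) * (conj (ga g) * z₀ + conj (gb g) * z₁) ^ (k : ℕ)
          * (-(gb g) * z₀ + ga g * z₁) ^ (n - (k : ℕ))

/-- The action of the Wigner matrix `D^ℓ(g)` on a vector `v ∈ ℂ^{2ℓ+1}`. -/
def DVec {n : ℕ} (D : Fin (n + 1) → Fin (n + 1) → SU2 → ℂ) (g : SU2)
    (v : Fin (n + 1) → ℂ) : Fin (n + 1) → ℂ :=
  fun j => ∑ k, D j k g * v k

/-- The Hermitian inner product `⟨v,w⟩ = ∑ₖ conj (v k) * (w k)` on `ℂ^N`. -/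
def herm {N : ℕ} (v w : Fin N → ℂ) : ℂ := ∑ r, conj (v r) * w r

lemma SU2_normSq (g : SU2) : conj (ga g) * ga g + conj (gb g) * gb g = 1 := by
  have h1 := Matrix.UnitaryGroup.star_mul_self g.1
  have h2 := congrFun (congrFun h1 0) 0
  simpa [Matrix.mul_apply, Fin.sum_univ_two, Matrix.star_apply, ga, gb] using h2

lemma SU2_eq_of_gb (g : SU2) (hb : gb g = 0) : g.1.1 = h (ga g) 0 := by
  have h1 := Matrix.UnitaryGroup.star_mul_self g.1
  have hd : (g.1.1).det = 1 := g.2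
  have h2 := congrFun (congrFun h1 0) 1
  have h0 := SU2_normSq g
  have hb' : g.1.1 1 0 = 0 := hb
  rw [hb] at h0
  simp only [map_zero, mul_zero, add_zero] at h0
  have ha : ga g ≠ 0 := by
    intro h'
    simp [h'] at h0
  simp only [Matrix.mul_apply, Fin.sum_univ_two, Matrix.star_apply] at h2
  simp only [hb', star_zero, zero_mul, add_zero] at h2
  have h3 : g.1.1 0 1 = 0 := by
    have : star (g.1.1 0 0) ≠ 0 := by simpa [ga] using ha
    have h4 : star (g.1.1 0 0) * g.1.1 0 1 = 0 := by simpa using h2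
    exact (mul_eq_zero.mp h4).resolve_left this
  rw [Matrix.det_fin_two, hb', mul_zero, sub_zero] at hd
  have h5 : g.1.1 1 1 = conj (ga g) := by
    apply mul_left_cancel₀ ha
    rw [mul_comm (ga g) (conj (ga g)), h0]
    exact hd
  ext i j
  fin_cases i <;> fin_cases j
  · simp [h, ga]
  · simpa [h] using h3
  · simpa [h] using hb'
  · simpa [h] using h5

lemma pow_key (a : ℂ) (ha : conj a * a = 1) (n k : ℕ) (hk : k ≤ n) :
    conj a ^ k * a ^ (n - k) = 1 ↔ a ^ (2 * (k : ℤ) - (n : ℤ)).natAbs = 1 := by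
  have hc : conj a ^ k * a ^ k = 1 := by rw [← mul_pow, ha, one_pow]
  have ha0 : a ≠ 0 := by
    rintro rfl
    simp at ha
  have e1 : conj a ^ k * a ^ (n - k) = 1 ↔ a ^ (n - k) = a ^ k := by
    constructor
    · intro h1
      have : conj a ^ k ≠ 0 := by
        intro h'
        simp [h'] at hc
      apply mul_left_cancel₀ this
      rw [h1, hc]
    · intro h1
      rw [h1, hc]
  rw [e1]
  rcases le_total k (n - k) with h1 | h1
  · obtain ⟨d, hd⟩ := Nat.exists_eq_add_of_le h1
    have : (2 * (k : ℤ) - (n : ℤ)).natAbs = d := by omega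
    rw [this, hd, pow_add]
    constructor
    · intro h2
      exact mul_left_cancel₀ (pow_ne_zero k ha0) (by rw [h2, mul_one])
    · intro h2
      rw [h2, mul_one]
  · obtain ⟨d, hd⟩ := Nat.exists_eq_add_of_le h1
    have : (2 * (k : ℤ) - (n : ℤ)).natAbs = d := by omega
    rw [this]
    have h3 : a ^ k = a ^ (n - k) * a ^ d := by rw [← pow_add, ← hd]
    rw [h3]
    constructor
    · intro h2
      exact mul_left_cancel₀ (pow_ne_zero (n - k) ha0) (by rw [mul_one]; exact h2.symm)
    · intro h2
      rw [h2, mul_one]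

lemma sqrt_choose_ne {n k : ℕ} (hk : k ≤ n) : (Real.sqrt (n.choose k) : ℂ) ≠ 0 := by
  have : (0 : ℝ) < n.choose k := by exact_mod_cast Nat.choose_pos hk
  exact_mod_cast (Real.sqrt_pos.mpr this).ne'

lemma stab_fwd (n k : ℕ) (hkn : k ≤ n) (hk : 2 * k ≠ n) (a b : ℂ)
    (H : ∀ z₀ z₁ : ℂ, z₀ ^ k * z₁ ^ (n - k)
      = (conj a * z₀ + conj b * z₁) ^ k * (-b * z₀ + a * z₁) ^ (n - k)) : b = 0 := by
  by_contra hb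
  have hb' : conj b ≠ 0 := by simpa using hb
  have ha : a = 0 := by
    rcases Nat.eq_zero_or_pos k with h0 | h0
    · subst h0
      have := H 1 0
      have hn : n ≠ 0 := by omega
      simp [hn] at this
      exact absurd this.symm (pow_ne_zero n (neg_ne_zero.mpr hb))
    · have := H 0 1
      simp [h0.ne', hb] at this
      exact this.1
  subst ha
  have h1 := H 1 1
  have h2 := H 2 1
  simp only [map_zero, zero_mul, zero_add, add_zero, one_pow, mul_one] at h1 h2
  rw [mul_pow, ← mul_assoc, ← h1, one_mul] at h2
  have h3 : 2 ^ k = 2 ^ (n - k) := by exact_mod_cast h2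
  have := Nat.pow_right_injective (le_refl 2) h3
  omega

lemma stab_bwd (n : ℕ) (k : Fin (n + 1)) (c : Fin (n + 1) → ℂ) (d : ℂ)
    (H : ∀ z : ℂ, ∑ j : Fin (n + 1), c j * z ^ (j : ℕ) = d * z ^ (k : ℕ)) (j : Fin (n + 1)) :
    c j = if j = k then d else 0 := by
  have hp : (∑ j : Fin (n + 1), Polynomial.C (c j) * Polynomial.X ^ (j : ℕ))
      = Polynomial.C d * Polynomial.X ^ (k : ℕ) := by
    apply Polynomial.funext
    intro z
    rw [Polynomial.eval_finset_sum]
    simpa using H z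
  have := congrArg (fun p => Polynomial.coeff p (j : ℕ)) hp
  simpa [Polynomial.finset_sum_coeff, Polynomial.coeff_C_mul, Polynomial.coeff_X_pow,
    Fin.val_inj] using this

lemma stab_iff (n : ℕ) (D : Fin (n + 1) → Fin (n + 1) → SU2 → ℂ)
    (hD : IsWigner n D) (k : Fin (n + 1)) (hk : 2 * (k : ℕ) ≠ n) (g : SU2) :
    (∀ j : Fin (n + 1), D j k g = if j = k then 1 else 0)
      ↔ ∃ a : ℂ, a ^ (2 * (k : ℤ) - (n : ℤ)).natAbs = 1 ∧ g.1.1 = h a 0 := by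
  have hkn : (k : ℕ) ≤ n := Nat.lt_succ_iff.mp k.2
  have hs := sqrt_choose_ne hkn
  have h0 := SU2_normSq g
  constructor
  · intro hg
    have H : ∀ z₀ z₁ : ℂ, z₀ ^ (k : ℕ) * z₁ ^ (n - (k : ℕ))
      = (conj (ga g) * z₀ + conj (gb g) * z₁) ^ (k : ℕ)
        * (-(gb g) * z₀ + ga g * z₁) ^ (n - (k : ℕ)) := by
      intro z₀ z₁
      have := hD g k z₀ z₁
      simp only [hg, mul_ite, mul_one, mul_zero, Finset.sum_ite_eq', Finset.mem_univ,
        if_true] at this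
      apply mul_left_cancel₀ hs
      rw [← mul_assoc, ← mul_assoc, this]
    have hb := stab_fwd n k hkn hk _ _ H
    refine ⟨ga g, ?_, SU2_eq_of_gb g hb⟩
    have h1 := H 1 1
    simp only [hb, map_zero, zero_mul, neg_zero, zero_add, add_zero, mul_one, one_pow] at h0 h1
    exact (pow_key _ h0 n k hkn).mp h1.symm
  · rintro ⟨a, ha, hga⟩ j
    have hb : gb g = 0 := by simp [gb, hga, h]
    have ha' : ga g = a := by simp [ga, hga, h]
    rw [hb, ha'] at h0
    simp only [map_zero, zero_mul, add_zero] at h0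
    have h1 := (pow_key a h0 n k hkn).mpr ha
    have := stab_bwd n k (fun j => (Real.sqrt (n.choose (j : ℕ)) : ℂ) * D j k g)
      (Real.sqrt (n.choose (k : ℕ)) : ℂ) (by
        intro z
        have h2 := hD g k z 1
        rw [hb, ha'] at h2
        simp only [map_zero, zero_mul, neg_zero, zero_add, add_zero, mul_one, one_pow] at h2
        rw [mul_pow, ← mul_assoc, mul_right_comm, mul_assoc _ (conj a ^ (k : ℕ)), h1, mul_one] at h2
        rw [← h2]
        exact Finset.sum_congr rfl fun i _ => by ring) j
    have hj := sqrt_choose_ne (Nat.lt_succ_iff.mp j.2)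
    apply mul_left_cancel₀ hj
    refine this.trans ?_
    by_cases e : j = k
    · simp [e]
    · simp [e]

lemma exists_SU2 (a : ℂ) (ha : conj a * a = 1) : ∃ g : SU2, g.1.1 = h a 0 := by
  have hu : h a 0 ∈ Matrix.unitaryGroup (Fin 2) ℂ := by
    rw [Matrix.mem_unitaryGroup_iff']
    ext i j
    fin_cases i <;> fin_cases j <;>
      simp [h, Matrix.mul_apply, Fin.sum_univ_two, Matrix.star_apply, ha, mul_comm a]
  refine ⟨⟨⟨h a 0, hu⟩, ?_⟩, rfl⟩
  change (h a 0).det = 1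
  simp [h, Matrix.det_fin_two, mul_comm a, ha]

lemma card_stab (N : ℕ) (hN : N ≠ 0) :
    Nat.card {g : SU2 | ∃ a : ℂ, a ^ N = 1 ∧ g.1.1 = h a 0} = N := by
  have : NeZero N := ⟨hN⟩
  have hc : Nat.card (rootsOfUnity N ℂ) = N := Complex.card_rootsOfUnity N
  refine Eq.trans ?_ hc
  have hx : ∀ x : rootsOfUnity N ℂ, ((x : ℂˣ) : ℂ) ^ N = 1 := by
    intro x
    have := x.2
    rw [mem_rootsOfUnity'] at this
    exact this
  have hx' : ∀ x : rootsOfUnity N ℂ, ∃ g : SU2, g.1.1 = h ((x : ℂˣ) : ℂ) 0 := by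
    intro x
    apply exists_SU2
    rw [← Complex.normSq_eq_conj_mul_self, Complex.normSq_eq_norm_sq,
      Complex.norm_eq_one_of_pow_eq_one (hx x) hN]
    simp
  choose f hf using hx'
  symm
  apply Nat.card_eq_of_bijective (fun x : rootsOfUnity N ℂ =>
    (⟨f x, (x : ℂˣ), hx x, hf x⟩ : {g : SU2 | ∃ a : ℂ, a ^ N = 1 ∧ g.1.1 = h a 0}))
  constructor
  · intro x y hxy
    have h1 : f x = f y := congrArg Subtype.val hxy
    have h2 := hf x
    rw [h1, hf y] at h2
    have h3 := congrFun (congrFun h2 0) 0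
    apply Subtype.ext
    apply Units.ext
    simpa [h] using h3.symm
  · rintro ⟨g, a, ha, hg⟩
    refine ⟨rootsOfUnity.mkOfPowEq a ha, ?_⟩
    apply Subtype.ext
    apply Subtype.ext
    apply Subtype.ext
    change (f _).1.1 = g.1.1
    rw [hf, hg]
    simp

/-- stabilizer of a canonical basis vector `e_s` with `s ≠ 0` (i.e. column
index `k` with `2k ≠ n`): it is the set of diagonal matrices `h(α,0)` with `α^{2|s|} = 1`,
where `2|s| = |2k − n|`; in particular it has exactly `2|s|` elements. -/
theorem wigner_stabilizer_basis_vector (n : ℕ) (D : Fin (n + 1) → Fin (n + 1) → SU2 → ℂ)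
    (hD : IsWigner n D) (k : Fin (n + 1)) (hk : 2 * (k : ℕ) ≠ n) :
    {g : SU2 | ∀ j : Fin (n + 1), D j k g = if j = k then 1 else 0}
      = {g : SU2 | ∃ a : ℂ, a ^ (2 * (k : ℤ) - (n : ℤ)).natAbs = 1 ∧ g.1.1 = h a 0} ∧
    Nat.card {g : SU2 | ∀ j : Fin (n + 1), D j k g = if j = k then 1 else 0}
      = (2 * (k : ℤ) - (n : ℤ)).natAbs := by
  have hset : {g : SU2 | ∀ j : Fin (n + 1), D j k g = if j = k then 1 else 0}
      = {g : SU2 | ∃ a : ℂ, a ^ (2 * (k : ℤ) - (n : ℤ)).natAbs = 1 ∧ g.1.1 = h a 0} := by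
    ext g
    exact stab_iff n D hD k hk g
  refine ⟨hset, ?_⟩
  rw [hset]
  exact card_stab _ (by omega)
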